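/- Let s ∈ ℂ, t > 0 with t ≥ 2σ‖W‖, and j ∈ [n]. Let z ∈ ℂ_{≤1}^n be the fixed point of G(·, s, t) and let z^{(−j)} ∈ ℂ_{≤1}^n be the fixed point of G^{(−j)}(·, s, t). Then for every r ∈ ℝ, (1/n)·Σ_{k=1}^n 1{σ·|[Wz]_k| ≥ |s| − r} ≤ (1/n)·Σ_{k=1}^n 1{σ·|[W z^{(−k)}]_k| ≥ |s| − r − 3σ‖W‖}, where for each k ∈ [n], z^{(−k)} denotes the fixed point of G^{(−k)}(·, s, t). -/

import Mathlib

open scoped Classical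
open Matrix

noncomputable section

namespace PhaseSync

/-- Euclidean norm of a complex vector. -/
def enorm {k : ℕ} (v : Fin k → ℂ) : ℝ := Real.sqrt (∑ i, ‖v i‖ ^ 2)

/-- Frobenius norm of a complex matrix. -/
def fnorm {k l : ℕ} (A : Matrix (Fin k) (Fin l) ℂ) : ℝ :=
  Real.sqrt (∑ i, ∑ j, ‖A i j‖ ^ 2)

/-- L2 operator norm of a square complex matrix. -/
def opNorm {k : ℕ} (A : Matrix (Fin k) (Fin k) ℂ) : ℝ :=
  ‖Matrix.toEuclideanCLM (𝕜 := ℂ) (n := Fin k) A‖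

/-- Indicator function of a proposition. -/
def ind (P : Prop) : ℝ := if P then 1 else 0

/-- The loss ℓ_m(V, z) = min_{a : ‖a‖=1} ‖V - a zᴴ‖_F² / n. -/
def lossM {k l : ℕ} (V : Matrix (Fin k) (Fin l) ℂ) (z : Fin l → ℂ) : ℝ :=
  sInf { r : ℝ | ∃ a : Fin k → ℂ, enorm a = 1 ∧
    r = fnorm (V - Matrix.vecMulVec a (star z)) ^ 2 / l }

/-- The loss ℓ_1(z', z) = min_{|a|=1} ‖z' - a z‖² / n. -/
def loss1 {l : ℕ} (z' z : Fin l → ℂ) : ℝ :=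
  sInf { r : ℝ | ∃ a : ℂ, ‖a‖ = 1 ∧ r = enorm (z' - a • z) ^ 2 / l }

/-- The mapping F₁: entrywise normalization of Y z. -/
def F1 {l : ℕ} (Y : Matrix (Fin l) (Fin l) ℂ) (z : Fin l → ℂ) : Fin l → ℂ :=
  fun j => if Y.mulVec z j ≠ 0 then Y.mulVec z j / (‖Y.mulVec z j‖ : ℂ) else z j

/-- jth column of a matrix. -/
def col {k l : ℕ} (A : Matrix (Fin k) (Fin l) ℂ) (j : Fin l) : Fin k → ℂ := fun i => A i j

/-- The mapping F_m: columnwise normalization of V Yᴴ. -/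
def Fm {k l : ℕ} (Y : Matrix (Fin l) (Fin l) ℂ) (V : Matrix (Fin k) (Fin l) ℂ) :
    Matrix (Fin k) (Fin l) ℂ :=
  Matrix.of fun i j =>
    if col (V * Yᴴ) j ≠ 0 then (V * Yᴴ) i j / ((enorm (col (V * Yᴴ) j) : ℝ) : ℂ) else V i j

/-- g_t(x) = x / max(|x|, t). -/
def gfun (t : ℝ) (x : ℂ) : ℂ := x / ((max (‖x‖) t : ℝ) : ℂ)

/-- The mapping G(z, s, t), coordinatewise g_t(z*_j s + σ [W z]_j). -/
def G {l : ℕ} (zstar : Fin l → ℂ) (σ : ℝ) (W : Matrix (Fin l) (Fin l) ℂ)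
    (z : Fin l → ℂ) (s : ℂ) (t : ℝ) : Fin l → ℂ :=
  fun j => gfun t (zstar j * s + (σ : ℂ) * W.mulVec z j)

/-- The mapping F₁'(z, s), entrywise normalization of z* s + σ W z. -/
def F1' {l : ℕ} (zstar : Fin l → ℂ) (σ : ℝ) (W : Matrix (Fin l) (Fin l) ℂ)
    (z : Fin l → ℂ) (s : ℂ) : Fin l → ℂ :=
  fun j =>
    if zstar j * s + (σ : ℂ) * W.mulVec z j ≠ 0 then
      (zstar j * s + (σ : ℂ) * W.mulVec z j) /
        ((‖zstar j * s + (σ : ℂ) * W.mulVec z j‖ : ℝ) : ℂ)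
    else z j

/-- W with jth row and column zeroed out. -/
def Wminus {l : ℕ} (W : Matrix (Fin l) (Fin l) ℂ) (j : Fin l) : Matrix (Fin l) (Fin l) ℂ :=
  Matrix.of fun k i => if k = j ∨ i = j then 0 else W k i

lemma gfun_lip (t : ℝ) (ht : 0 < t) (x y : ℂ) : t * ‖gfun t x - gfun t y‖ ≤ ‖x - y‖ := by
  have hxa : ‖x‖ ≤ max ‖x‖ t := le_max_left _ _
  have hta : t ≤ max ‖x‖ t := le_max_right _ _
  have hyb : ‖y‖ ≤ max ‖y‖ t := le_max_left _ _
  have htb : t ≤ max ‖y‖ t := le_max_right _ _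
  have hmx : t * (‖x‖ / max ‖x‖ t) = min ‖x‖ t := by
    rcases le_total ‖x‖ t with h | h
    · rw [max_eq_right h, min_eq_left h]; field_simp
    · have : ‖x‖ ≠ 0 := (lt_of_lt_of_le ht h).ne'
      rw [max_eq_left h, min_eq_right h]; field_simp
  have hmy : t * (‖y‖ / max ‖y‖ t) = min ‖y‖ t := by
    rcases le_total ‖y‖ t with h | h
    · rw [max_eq_right h, min_eq_left h]; field_simp
    · have : ‖y‖ ≠ 0 := (lt_of_lt_of_le ht h).ne'
      rw [max_eq_left h, min_eq_right h]; field_simp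
  have hmin : (min ‖x‖ t - min ‖y‖ t) ^ 2 ≤ (‖x‖ - ‖y‖) ^ 2 := by
    apply sq_le_sq.mpr
    have := abs_min_sub_min_le_max ‖x‖ t ‖y‖ t
    simpa using this
  unfold gfun
  generalize max ‖x‖ t = a at *
  generalize max ‖y‖ t = b at *
  have ha : 0 < a := lt_of_lt_of_le ht hta
  have hb : 0 < b := lt_of_lt_of_le ht htb
  have e1 : x / (a : ℂ) = (a⁻¹ : ℝ) • x := by
    rw [Complex.real_smul]; push_cast; rw [div_eq_inv_mul]
  have e2 : y / (b : ℂ) = (b⁻¹ : ℝ) • y := by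
    rw [Complex.real_smul]; push_cast; rw [div_eq_inv_mul]
  rw [e1, e2]
  have n1 := norm_sub_sq_real ((a⁻¹ : ℝ) • x) ((b⁻¹ : ℝ) • y)
  have n2 := norm_sub_sq_real x y
  have hc := real_inner_le_norm x y
  rw [real_inner_smul_left, real_inner_smul_right, norm_smul, norm_smul, Real.norm_eq_abs,
    Real.norm_eq_abs, abs_of_pos (inv_pos.mpr ha), abs_of_pos (inv_pos.mpr hb)] at n1
  apply le_of_sq_le_sq _ (norm_nonneg _)
  rw [mul_pow, n1, n2]
  generalize inner ℝ x y = c at *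
  rw [← hmx, ← hmy] at hmin
  have hk : t * a⁻¹ * (t * b⁻¹) ≤ 1 := by
    have h1 : t * a⁻¹ ≤ 1 := by rw [← div_eq_mul_inv]; exact (div_le_one ha).mpr hta
    have h2 : t * b⁻¹ ≤ 1 := by rw [← div_eq_mul_inv]; exact (div_le_one hb).mpr htb
    exact mul_le_one₀ h1 (by positivity) h2
  have hm := mul_nonneg (sub_nonneg.mpr hk) (sub_nonneg.mpr hc)
  rw [div_eq_mul_inv, div_eq_mul_inv] at hmin
  nlinarith

/-- The mulVec as an operator-norm bound. -/
lemma norm_mulVec_le {n : ℕ} (W : Matrix (Fin n) (Fin n) ℂ) (v : Fin n → ℂ) :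
    ‖WithLp.toLp 2 (W.mulVec v)‖ ≤ opNorm W * ‖WithLp.toLp 2 v‖ := by
  have h := (Matrix.toEuclideanCLM (𝕜 := ℂ) (n := Fin n) W).le_opNorm (WithLp.toLp 2 v)
  rw [Matrix.toEuclideanCLM_toLp] at h
  exact h

lemma single_norm {n : ℕ} (k : Fin n) (c : ℂ) :
    ‖(WithLp.toLp 2 (Pi.single k c) : EuclideanSpace ℂ (Fin n))‖ = ‖c‖ :=
  EuclideanSpace.norm_single k c

lemma dist_le {n : ℕ} (zstar : Fin n → ℂ)
    (σ : ℝ) (hσ : 0 < σ) (W : Matrix (Fin n) (Fin n) ℂ)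
    (s : ℂ) (t : ℝ) (ht : 0 < t) (ht2 : 2 * σ * opNorm W ≤ t)
    (z : Fin n → ℂ) (hz1 : ∀ i, ‖z i‖ ≤ 1) (hz2 : z = G zstar σ W z s t)
    (k : Fin n) (y : Fin n → ℂ) (hy1 : ∀ i, ‖y i‖ ≤ 1)
    (hy2 : y = G zstar σ (Wminus W k) y s t) :
    ‖(WithLp.toLp 2 (z - y) : EuclideanSpace ℂ (Fin n))‖ ≤ 3 := by
  set u : Fin n → ℂ := fun i => if i = k then 0 else z i - y i with hu
  set v : Fin n → ℂ := u + Pi.single k (z k) with hv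
  have hmul : ∀ i, i ≠ k → W.mulVec z i - (Wminus W k).mulVec y i = W.mulVec v i := by
    intro i hi
    simp only [Matrix.mulVec, dotProduct, ← Finset.sum_sub_distrib]
    apply Finset.sum_congr rfl
    intro l _
    by_cases hl : l = k
    · subst hl; simp [hv, hu, Wminus]
    · simp [hv, hu, Wminus, hl, hi]; ring
  have hpt : ∀ i, t * ‖u i‖ ≤ σ * ‖W.mulVec v i‖ := by
    intro i
    by_cases hi : i = k
    · simp only [hu, hi, if_true, norm_zero, mul_zero]; positivity
    · have e : u i = gfun t (zstar i * s + (σ : ℂ) * W.mulVec z i)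
          - gfun t (zstar i * s + (σ : ℂ) * (Wminus W k).mulVec y i) := by
        simp only [hu, hi, if_false]
        exact congrArg₂ (· - ·) (congrFun hz2 i) (congrFun hy2 i)
      rw [e]
      refine (gfun_lip t ht _ _).trans_eq ?_
      rw [← hmul i hi, add_sub_add_left_eq_sub, ← mul_sub, norm_mul, Complex.norm_real,
        Real.norm_of_nonneg hσ.le]
  have hN : t * ‖(WithLp.toLp 2 u : EuclideanSpace ℂ (Fin n))‖
      ≤ σ * ‖(WithLp.toLp 2 (W.mulVec v) : EuclideanSpace ℂ (Fin n))‖ := by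
    apply le_of_sq_le_sq _ (by positivity)
    rw [mul_pow, mul_pow, EuclideanSpace.norm_sq_eq, EuclideanSpace.norm_sq_eq,
      Finset.mul_sum, Finset.mul_sum]
    apply Finset.sum_le_sum
    intro i _
    rw [← mul_pow, ← mul_pow]
    exact pow_le_pow_left₀ (by positivity) (hpt i) 2
  have hW := norm_mulVec_le W v
  have hv1 : ‖(WithLp.toLp 2 v : EuclideanSpace ℂ (Fin n))‖
      ≤ ‖(WithLp.toLp 2 u : EuclideanSpace ℂ (Fin n))‖ + 1 := by
    rw [hv, WithLp.toLp_add]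
    refine (norm_add_le _ _).trans ?_
    rw [single_norm]
    linarith [hz1 k]
  have hzy : z - y = u + Pi.single k (z k - y k) := by
    ext i
    by_cases hi : i = k
    · subst hi; simp [hu]
    · simp [hu, hi]
  have hd : ‖(WithLp.toLp 2 (z - y) : EuclideanSpace ℂ (Fin n))‖
      ≤ ‖(WithLp.toLp 2 u : EuclideanSpace ℂ (Fin n))‖ + 2 := by
    rw [hzy, WithLp.toLp_add]
    refine (norm_add_le _ _).trans ?_
    rw [single_norm]
    linarith [hz1 k, hy1 k, norm_sub_le (z k) (y k)]
  have hop : 0 ≤ opNorm W := norm_nonneg _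
  have h1 : t * ‖(WithLp.toLp 2 u : EuclideanSpace ℂ (Fin n))‖
      ≤ t / 2 * (‖(WithLp.toLp 2 u : EuclideanSpace ℂ (Fin n))‖ + 1) := by
    calc _ ≤ σ * (opNorm W * (‖(WithLp.toLp 2 u : EuclideanSpace ℂ (Fin n))‖ + 1)) := by
          refine hN.trans (mul_le_mul_of_nonneg_left (hW.trans ?_) hσ.le)
          exact mul_le_mul_of_nonneg_left hv1 hop
      _ = (σ * opNorm W) * (‖(WithLp.toLp 2 u : EuclideanSpace ℂ (Fin n))‖ + 1) := by ring
      _ ≤ _ := by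
          apply mul_le_mul_of_nonneg_right _ (by positivity)
          linarith
  have h2 : ‖(WithLp.toLp 2 u : EuclideanSpace ℂ (Fin n))‖ ≤ 1 := by
    by_contra hcon
    push Not at hcon
    nlinarith
  linarith

theorem stmt4 {n : ℕ} (hn : 1 ≤ n)
    (zstar : Fin n → ℂ) (hzstar : ∀ j, ‖zstar j‖ = 1)
    (σ : ℝ) (hσ : 0 < σ) (W : Matrix (Fin n) (Fin n) ℂ) (hW : W.IsHermitian)
    (s : ℂ) (t : ℝ) (ht : 0 < t) (ht2 : 2 * σ * opNorm W ≤ t) (j : Fin n)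
    (z : Fin n → ℂ) (hz1 : ∀ i, ‖z i‖ ≤ 1) (hz2 : z = G zstar σ W z s t)
    (zlo : Fin n → (Fin n → ℂ))
    (hzlo : ∀ k : Fin n, (∀ i, ‖zlo k i‖ ≤ 1) ∧
      zlo k = G zstar σ (Wminus W k) (zlo k) s t)
    (r : ℝ) :
    (1 / (n : ℝ)) * ∑ k : Fin n, ind (‖s‖ - r ≤ σ * ‖W.mulVec z k‖) ≤
      (1 / (n : ℝ)) * ∑ k : Fin n,
        ind (‖s‖ - r - 3 * σ * opNorm W ≤ σ * ‖W.mulVec (zlo k) k‖) := by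
  apply mul_le_mul_of_nonneg_left _ (by positivity)
  apply Finset.sum_le_sum
  intro k _
  have key : ‖W.mulVec z k‖ ≤ ‖W.mulVec (zlo k) k‖ + opNorm W * 3 := by
    have h := dist_le zstar σ hσ W s t ht ht2 z hz1 hz2 k (zlo k) (hzlo k).1 (hzlo k).2
    have h1 := norm_mulVec_le W (z - zlo k)
    have h2 := PiLp.norm_apply_le (WithLp.toLp 2 (W.mulVec (z - zlo k))) k
    have h3 : ‖W.mulVec (z - zlo k) k‖ ≤ opNorm W * 3 :=
      (h2.trans h1).trans (mul_le_mul_of_nonneg_left h (norm_nonneg _))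
    rw [Matrix.mulVec_sub, Pi.sub_apply] at h3
    linarith [norm_sub_norm_le (W.mulVec z k) (W.mulVec (zlo k) k)]
  have key2 := mul_le_mul_of_nonneg_left key hσ.le
  unfold ind
  split_ifs with h1 h2
  · exact le_rfl
  · exact absurd (by linarith) h2
  · exact zero_le_one
  · exact le_rfl

end PhaseSync
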